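/- Let (A, 𝔪, k) be a commutative Noetherian local ring and suppose M is a finitely generated A-module of free reducible complexity with cx M = c > 0; choose modules M = K_0, K_1, …, K_c, integers n_1, …, n_c ≥ 0 and exact sequences 0 → K_{i−1} → K_i → Ω^{n_i}_A(K_{i−1}) → 0 with cx K_i = c − i, and set b = max_i { depth A − depth K_i }. Then for any finitely generated A-module N the following are equivalent: (i) there exists an integer t > b such that Tor^A_{t+i}(M,N) = 0 for all 0 ≤ i ≤ n_1 + ⋯ + n_c; (ii) Tor^A_i(M,N) = 0 for all i ≫ 0; (iii) Tor^A_i(M,N) = 0 for all i > b. -/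

import Mathlib

open CategoryTheory Opposite Filter IsLocalRing

universe u

namespace ComplexityTest

variable (A : Type u) [CommRing A] [IsLocalRing A]

structure MinFreeRes (M : Type u) [AddCommGroup M] [Module A M] : Type u where
  b : ℕ → ℕ
  d : (n : ℕ) → ((Fin (b (n + 1)) → A) →ₗ[A] (Fin (b n) → A))
  aug : (Fin (b 0) → A) →ₗ[A] M
  aug_surjective : Function.Surjective aug
  exact_zero : Function.Exact (d 0) aug
  exact_succ : ∀ n, Function.Exact (d (n + 1)) (d n)
  minimal : ∀ n x i, d n x i ∈ maximalIdeal A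

variable (M : Type u) [AddCommGroup M] [Module A M]

def HasComplexityLE (t : ℕ) : Prop :=
  ∃ (R : MinFreeRes A M) (a : ℝ), ∀ᶠ n : ℕ in atTop, (R.b n : ℝ) ≤ a * (n : ℝ) ^ ((t : ℤ) - 1)

noncomputable def complexity : ℕ∞ :=
  sInf {c : ℕ∞ | ∃ t : ℕ, c = t ∧ HasComplexityLE A M t}

def HasProjDimLE (t : ℕ) : Prop :=
  ∃ R : MinFreeRes A M, ∀ i, t < i → R.b i = 0

noncomputable def projDim : ℕ∞ :=
  sInf {c : ℕ∞ | ∃ t : ℕ, c = t ∧ HasProjDimLE A M t}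

def HasFiniteProjDim : Prop :=
  ∃ t : ℕ, HasProjDimLE A M t

def IsSyzygyOf (S : Type u) [AddCommGroup S] [Module A S] : ℕ → Prop
  | 0 => Nonempty (S ≃ₗ[A] M)
  | 1 => ∃ R : MinFreeRes A M, Nonempty (S ≃ₗ[A] (LinearMap.ker R.aug))
  | (n + 2) => ∃ R : MinFreeRes A M, Nonempty (S ≃ₗ[A] (LinearMap.ker (R.d n)))

variable {A M} in
def IsSES {K S : Type u} [AddCommGroup K] [Module A K] [AddCommGroup S] [Module A S]
    (f : M →ₗ[A] K) (g : K →ₗ[A] S) : Prop :=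
  Function.Injective f ∧ Function.Exact f g ∧ Function.Surjective g

noncomputable def extModule (n : ℕ) (N : Type u) [AddCommGroup N] [Module A N] :
    ModuleCat A :=
  ((_root_.Ext A (ModuleCat.{u} A) n).obj (op (ModuleCat.of A M))).obj (ModuleCat.of A N)

def extVanish (n : ℕ) (N : Type u) [AddCommGroup N] [Module A N] : Prop :=
  Subsingleton (extModule A M n N)

/-- The `n`-th Tor module `Tor^A_n(M, N)`. -/
noncomputable def torModule (n : ℕ) (N : Type u) [AddCommGroup N] [Module A N] :
    ModuleCat A :=
  ((Tor (ModuleCat.{u} A) n).obj (ModuleCat.of A M)).obj (ModuleCat.of A N)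

/-- The vanishing `Tor^A_n(M, N) = 0`. -/
def torVanish (n : ℕ) (N : Type u) [AddCommGroup N] [Module A N] : Prop :=
  Subsingleton (torModule A M n N)

noncomputable def depth : ℕ∞ :=
  sInf {c : ℕ∞ | ∃ i : ℕ, c = i ∧ ¬ extVanish A (ResidueField A) i M}

variable {A}

/-- The category of modules of *free reducible complexity* over the local ring `A`.
It is defined inductively: every finitely generated module of finite projective
dimension has free reducible complexity, and a finitely generated module `M` of finite
positive complexity has free reducible complexity provided there is a short exact
sequence `0 → M → K → Ω^n_A(M) → 0` (necessarily induced by a cohomology element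
`η ∈ Ext^{n+1}_A(M,M)`) where `K` is a finitely generated module of free reducible
complexity with `cx K = cx M - 1`. -/
inductive HasFreeRedCxCat : ModuleCat.{u} A → Prop
  | of_finite_projDim (M : ModuleCat.{u} A) (hfg : Module.Finite A M)
      (h : HasFiniteProjDim A M) : HasFreeRedCxCat M
  | step (M K S : ModuleCat.{u} A) (n : ℕ)
      (hfg : Module.Finite A M) (hKfg : Module.Finite A K)
      (hpos : 0 < complexity A M) (hfin : complexity A M ≠ ⊤)
      (hsyz : IsSyzygyOf A M S n)
      (f : M →ₗ[A] K) (g : K →ₗ[A] S) (hses : IsSES f g)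
      (hcx : complexity A K = complexity A M - 1)
      (hK : HasFreeRedCxCat K) : HasFreeRedCxCat M

/-- The category of modules of *reducible complexity* over the local ring `A`: as for
free reducible complexity, but where in addition the reductions are required to
preserve depth. -/
inductive HasRedCxCat : ModuleCat.{u} A → Prop
  | of_finite_projDim (M : ModuleCat.{u} A) (hfg : Module.Finite A M)
      (h : HasFiniteProjDim A M) : HasRedCxCat M
  | step (M K S : ModuleCat.{u} A) (n : ℕ)
      (hfg : Module.Finite A M) (hKfg : Module.Finite A K)
      (hpos : 0 < complexity A M) (hfin : complexity A M ≠ ⊤)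
      (hsyz : IsSyzygyOf A M S n)
      (f : M →ₗ[A] K) (g : K →ₗ[A] S) (hses : IsSES f g)
      (hcx : complexity A K = complexity A M - 1)
      (hdepth : depth A K = depth A M)
      (hK : HasRedCxCat K) : HasRedCxCat M

variable (A)

/-- `M` has free reducible complexity. -/
def HasFreeRedCx (M : Type u) [AddCommGroup M] [Module A M] : Prop :=
  HasFreeRedCxCat (ModuleCat.of A M)

/-- `M` has reducible complexity. -/
def HasRedCx (M : Type u) [AddCommGroup M] [Module A M] : Prop :=
  HasRedCxCat (ModuleCat.of A M)

/-- A Noetherian local ring is Gorenstein if it has finite injective dimension over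
itself; by Bass' characterization, this is equivalent to the vanishing of
`Ext^i_A(k, A)` for all sufficiently large `i`. -/
def IsGorenstein : Prop :=
  ∃ n : ℕ, ∀ i : ℕ, n < i → extVanish A (ResidueField A) i A

end ComplexityTest

open ComplexityTest

/-!
`Tor` is computed from a projective resolution of `N`, so a short exact sequence in the first
variable gives a long exact sequence of `Tor`, and `Tor_{i+1}(Ω^n K, N) = Tor_{i+1+n}(K, N)`.
In `0 → K' → K → Ω^n K' → 0`, if `Tor(K, N)` vanishes in all degrees `> b`, then `Tor(K', N)` is
periodic of period `n + 1` in degrees `> b`, so `n + 1` consecutive zeros there make all of it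
vanish. Conversely, a window of `n + s + 1` consecutive zeros for `K'` yields one of `s + 1` for
`K`. Hence windows of zeros can be pushed up the chain `K_0, …, K_c`, and vanishing above `b` be
pulled back down, as soon as `Tor(K_c, N)` vanishes above `b`.

The module `K_c` has finite projective dimension, which is at most `depth A - depth K_c ≤ b` by the
inequality half of the Auslander–Buchsbaum formula. Its proof moves a nonzero class in
`Ext^d(k, F)`, where `d = depth A` and `F` is the last term of a minimal free resolution of length
`p`, down to `Ext^{d-p}(k, K_c)`. Finally `d` is finite because it is at most the Krull dimension.
-/

namespace ComplexityTest

section Ext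

universe v w

variable {R : Type*} [Ring R] {C : Type*} [Category.{v} C] [Abelian C] [Linear R C]
  {X : C} (P : ProjectiveResolution X) (Y : C)

/-- For `n = 0` the index `n - 1` is again `0`, and `P.complex.d 0 0 = 0`: the right-hand side then
says that every cocycle is zero. -/
theorem subsingleton_ext_iff_of_resolution [EnoughProjectives C] (n : ℕ) :
    Subsingleton (((_root_.Ext R C n).obj (op X)).obj Y) ↔
      ∀ f : P.complex.X n ⟶ Y, P.complex.d (n + 1) n ≫ f = 0 →
        ∃ g : P.complex.X (n - 1) ⟶ Y, P.complex.d n (n - 1) ≫ g = f := by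
  rw [← ModuleCat.isZero_iff_subsingleton, (P.isoExt n Y).isZero_iff,
    ← HomologicalComplex.exactAt_iff_isZero_homology,
    HomologicalComplex.exactAt_iff' _ (n - 1) n (n + 1) (by cases n <;> simp) (by simp),
    ShortComplex.moduleCat_exact_iff]
  rfl

theorem subsingleton_hom_iff_of_resolution :
    Subsingleton (X ⟶ Y) ↔ ∀ f : P.complex.X 0 ⟶ Y, P.complex.d 1 0 ≫ f = 0 → f = 0 := by
  let π : P.complex.X 0 ⟶ X := P.π.f 0
  have hπ : Epi π := inferInstanceAs (Epi (P.π.f 0))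
  constructor
  · intro h f hf
    obtain ⟨l, hl⟩ := P.exact₀.desc' f hf
    rw [← hl, show l = 0 from h.elim (α := X ⟶ Y) _ _]
    exact Limits.comp_zero
  · refine fun h => subsingleton_of_forall_eq 0 fun f => Limits.zero_of_epi_comp π (h _ ?_)
    exact (P.complex_d_comp_π_f_zero_assoc f).trans Limits.zero_comp

theorem subsingleton_abelianExt_iff_of_resolution [HasExt.{w} C] (n : ℕ) :
    Subsingleton (Abelian.Ext X Y n) ↔
      ∀ f : P.complex.X n ⟶ Y, P.complex.d (n + 1) n ≫ f = 0 →
        ∃ g : P.complex.X (n - 1) ⟶ Y, P.complex.d n (n - 1) ≫ g = f := by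
  cases n with
  | zero =>
    rw [Abelian.Ext.addEquiv₀.toEquiv.subsingleton_congr, subsingleton_hom_iff_of_resolution P]
    simp [eq_comm]
  | succ n =>
    constructor
    · intro h f hf
      exact (P.extMk_eq_zero_iff f (n + 2) rfl hf n rfl).1 (Subsingleton.elim _ _)
    · refine fun h => subsingleton_of_forall_eq 0 fun x => ?_
      obtain ⟨f, hf, rfl⟩ := P.extMk_surjective x (n + 2) rfl
      exact (P.extMk_eq_zero_iff f (n + 2) rfl hf n rfl).2 (h f hf)

/-- `extModule` is defined by the derived functor `_root_.Ext`, whereas the long exact sequences and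
the Yoneda product are available for `Abelian.Ext`. -/
theorem subsingleton_ext_iff_abelianExt [EnoughProjectives C] [HasExt.{w} C] (X Y : C) (n : ℕ) :
    Subsingleton (((_root_.Ext R C n).obj (op X)).obj Y) ↔ Subsingleton (Abelian.Ext X Y n) :=
  (subsingleton_ext_iff_of_resolution (projectiveResolution X) Y n).trans
    (subsingleton_abelianExt_iff_of_resolution (projectiveResolution X) Y n).symm

end Ext

section Tor

open MonoidalCategory

variable {A : Type u} [CommRing A]

/-- The complex `X ⊗ P`, as a functor of the module `X`. When `P` resolves `N` its homology is
`Tor(X, N)`, since Mathlib derives `Tor` in the second variable. -/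
noncomputable def tensorComplex (P : ChainComplex (ModuleCat.{u} A) ℕ) :
    ModuleCat.{u} A ⥤ ChainComplex (ModuleCat.{u} A) ℕ where
  obj X := (((tensoringLeft _).obj X).mapHomologicalComplex _).obj P
  map f := (NatTrans.mapHomologicalComplex ((tensoringLeft _).map f) _).app P

instance (P : ChainComplex (ModuleCat.{u} A) ℕ) : (tensorComplex P).PreservesZeroMorphisms where
  map_zero X Y := by
    ext i : 1
    exact (tensorRight (P.X i)).map_zero X Y

theorem shortExact_map_tensorComplex (P : ChainComplex (ModuleCat.{u} A) ℕ)
    [∀ i, Module.Flat A (P.X i)] {S : ShortComplex (ModuleCat.{u} A)} (hS : S.ShortExact) :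
    (S.map (tensorComplex P)).ShortExact :=
  HomologicalComplex.shortExact_of_degreewise_shortExact _ fun i =>
    hS.map_of_exact (tensorRight (P.X i))

theorem exactAt_tensorComplex_of_flat {P : ChainComplex (ModuleCat.{u} A) ℕ} {n : ℕ}
    (hP : P.ExactAt n) (X : ModuleCat.{u} A) [Module.Flat A X] :
    ((tensorComplex P).obj X).ExactAt n :=
  ShortComplex.Exact.map hP (tensorLeft X)

end Tor

section TorVanish

variable {A : Type u} [CommRing A] {M K S N : Type u}
  [AddCommGroup M] [Module A M] [AddCommGroup K] [Module A K] [AddCommGroup S] [Module A S]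
  [AddCommGroup N] [Module A N] {f : M →ₗ[A] K} {g : K →ₗ[A] S}

theorem IsSES.shortExact (h : IsSES f g) :
    (ModuleCat.shortComplexOfCompEqZero f g h.2.1.linearMap_comp_eq_zero).ShortExact :=
  ModuleCat.shortComplex_shortExact _ h.2.1 h.1 h.2.2

theorem isSES_subtype_ker (hg : Function.Surjective g) : IsSES (LinearMap.ker g).subtype g :=
  ⟨Subtype.val_injective, LinearMap.exact_subtype_ker_map g, hg⟩

theorem torVanish_iff_isZero_homology (P : ProjectiveResolution (ModuleCat.of A N)) (i : ℕ) :
    torVanish A M i N ↔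
      Limits.IsZero (((tensorComplex P.complex).obj (ModuleCat.of A M)).homology i) := by
  rw [torVanish, ← ModuleCat.isZero_iff_subsingleton]
  exact (P.isoLeftDerivedObj _ i).isZero_iff

theorem torVanish_iff_exactAt (P : ProjectiveResolution (ModuleCat.of A N)) (i : ℕ) :
    torVanish A M i N ↔ ((tensorComplex P.complex).obj (ModuleCat.of A M)).ExactAt i :=
  (torVanish_iff_isZero_homology P i).trans
    (HomologicalComplex.exactAt_iff_isZero_homology _ _).symm

instance {X : ModuleCat.{u} A} (P : ProjectiveResolution X) (i : ℕ) :
    Module.Flat A (P.complex.X i) :=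
  have := (IsProjective.iff_projective (P.complex.X i)).2 (P.projective i)
  Module.Flat.of_projective

theorem IsSES.torVanish_middle (h : IsSES f g) {i : ℕ} (hM : torVanish A M i N)
    (hS : torVanish A S i N) : torVanish A K i N := by
  let P := projectiveResolution (ModuleCat.of A N)
  rw [torVanish_iff_isZero_homology P] at *
  exact ((shortExact_map_tensorComplex P.complex h.shortExact).homology_exact₂
    i).isZero_of_both_zeros (hM.eq_of_src _ _) (hS.eq_of_tgt _ _)

theorem IsSES.torVanish_left (h : IsSES f g) {i : ℕ} (hS : torVanish A S (i + 1) N)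
    (hK : torVanish A K i N) : torVanish A M i N := by
  let P := projectiveResolution (ModuleCat.of A N)
  rw [torVanish_iff_isZero_homology P] at *
  exact ((shortExact_map_tensorComplex P.complex h.shortExact).homology_exact₁
    (i + 1) i rfl).isZero_of_both_zeros (hS.eq_of_src _ _) (hK.eq_of_tgt _ _)

theorem IsSES.torVanish_right (h : IsSES f g) {i : ℕ} (hK : torVanish A K (i + 1) N)
    (hM : torVanish A M i N) : torVanish A S (i + 1) N := by
  let P := projectiveResolution (ModuleCat.of A N)
  rw [torVanish_iff_isZero_homology P] at *
  exact ((shortExact_map_tensorComplex P.complex h.shortExact).homology_exact₃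
    (i + 1) i rfl).isZero_of_both_zeros (hK.eq_of_src _ _) (hM.eq_of_tgt _ _)

theorem torVanish_congr (e : M ≃ₗ[A] K) (i : ℕ) : torVanish A M i N ↔ torVanish A K i N := by
  simp only [torVanish, ← ModuleCat.isZero_iff_subsingleton]
  exact (((Tor (ModuleCat.{u} A) i).mapIso e.toModuleIso).app _).isZero_iff

theorem torVanish_of_subsingleton [Subsingleton M] (i : ℕ) : torVanish A M i N := by
  rw [torVanish_iff_isZero_homology (projectiveResolution (ModuleCat.of A N))]
  have hM : Limits.IsZero (ModuleCat.of A M) := ModuleCat.isZero_of_subsingleton _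
  exact (HomologicalComplex.homologyFunctor _ _ i).map_isZero (Functor.map_isZero _ hM)

theorem torVanish_succ_of_flat [Module.Flat A M] (i : ℕ) : torVanish A M (i + 1) N := by
  let P := projectiveResolution (ModuleCat.of A N)
  exact (torVanish_iff_exactAt P _).2
    (exactAt_tensorComplex_of_flat (P.complex_exactAt_succ i) (ModuleCat.of A M))

theorem IsSES.torVanish_succ_iff_of_flat [Module.Flat A K] (h : IsSES f g) (i : ℕ) :
    torVanish A M (i + 1) N ↔ torVanish A S (i + 2) N :=
  ⟨h.torVanish_right (torVanish_succ_of_flat _),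
    fun hS => h.torVanish_left hS (torVanish_succ_of_flat _)⟩

end TorVanish

namespace MinFreeRes

variable {A : Type u} [CommRing A] [IsLocalRing A] {M N : Type u} [AddCommGroup M] [Module A M]
  [AddCommGroup N] [Module A N] (R : MinFreeRes A M)

theorem isSES_aug : IsSES (LinearMap.ker R.aug).subtype R.aug :=
  isSES_subtype_ker R.aug_surjective

theorem subsingleton_of_b_zero_eq_zero (h : R.b 0 = 0) : Subsingleton M :=
  have : IsEmpty (Fin (R.b 0)) := by rw [h]; infer_instance
  R.aug_surjective.subsingleton

theorem aug_injective_of_b_one_eq_zero (h : R.b 1 = 0) : Function.Injective R.aug := by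
  have : IsEmpty (Fin (R.b (0 + 1))) := by rw [h]; infer_instance
  rw [injective_iff_map_eq_zero]
  intro x hx
  obtain ⟨y, rfl⟩ := (R.exact_zero x).1 hx
  rw [Subsingleton.elim y 0, map_zero]

/-- The augmentation as an isomorphism, for a resolution without a term in degree `1`. -/
noncomputable def augEquiv (h : R.b 1 = 0) : (Fin (R.b 0) → A) ≃ₗ[A] M :=
  LinearEquiv.ofBijective R.aug ⟨R.aug_injective_of_b_one_eq_zero h, R.aug_surjective⟩

/-- The minimal free resolution of the first syzygy obtained by dropping the term in degree `0`. -/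
def tail : MinFreeRes A (LinearMap.ker R.aug) where
  b n := R.b (n + 1)
  d n := R.d (n + 1)
  aug := (R.d 0).codRestrict _ R.exact_zero.apply_apply_eq_zero
  aug_surjective := by
    rintro ⟨x, hx⟩
    obtain ⟨y, rfl⟩ := (R.exact_zero x).1 hx
    exact ⟨y, rfl⟩
  exact_zero x := Subtype.ext_iff.trans (R.exact_succ 0 x)
  exact_succ n := R.exact_succ (n + 1)
  minimal n := R.minimal (n + 1)

theorem ker_tail_aug : LinearMap.ker R.tail.aug = LinearMap.ker (R.d 0) :=
  LinearMap.ker_codRestrict _ _ _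

theorem torVanish_ker_d_iff (n i : ℕ) :
    torVanish A (LinearMap.ker (R.d n)) (i + 1) N ↔ torVanish A M (i + 1 + (n + 2)) N := by
  induction n generalizing M with
  | zero =>
    calc torVanish A (LinearMap.ker (R.d 0)) (i + 1) N
      _ ↔ torVanish A (LinearMap.ker R.tail.aug) (i + 1) N :=
        torVanish_congr (LinearEquiv.ofEq _ _ R.ker_tail_aug.symm) _
      _ ↔ torVanish A (LinearMap.ker R.aug) (i + 2) N :=
        R.tail.isSES_aug.torVanish_succ_iff_of_flat i
      _ ↔ torVanish A M (i + 3) N := R.isSES_aug.torVanish_succ_iff_of_flat (i + 1)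
  | succ n ih => exact (ih R.tail).trans (R.isSES_aug.torVanish_succ_iff_of_flat _)

theorem torVanish_add_of_b_eq_zero {p : ℕ} (h : R.b p = 0) (i : ℕ) :
    torVanish A M (i + p) N := by
  induction p generalizing M with
  | zero =>
    have := R.subsingleton_of_b_zero_eq_zero h
    exact torVanish_of_subsingleton _
  | succ p ih => exact R.isSES_aug.torVanish_right (torVanish_succ_of_flat _) (ih R.tail h)

end MinFreeRes

section Syzygy

variable {A : Type u} [CommRing A] [IsLocalRing A] {M S N : Type u} [AddCommGroup M] [Module A M]
  [AddCommGroup S] [Module A S] [AddCommGroup N] [Module A N]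

theorem IsSyzygyOf.torVanish_succ_iff {n : ℕ} (h : IsSyzygyOf A M S n) (i : ℕ) :
    torVanish A S (i + 1) N ↔ torVanish A M (i + 1 + n) N := by
  match n, h with
  | 0, ⟨e⟩ => exact torVanish_congr e _
  | 1, ⟨R, ⟨e⟩⟩ => exact (torVanish_congr e _).trans (R.isSES_aug.torVanish_succ_iff_of_flat i)
  | n + 2, ⟨R, ⟨e⟩⟩ => exact (torVanish_congr e _).trans (R.torVanish_ker_d_iff n i)

end Syzygy

section ExtVanishing

open Abelian

universe v w

variable {C : Type*} [Category.{v} C] [Abelian C] [HasExt.{w} C] {X : C} {n : ℕ}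

theorem subsingleton_ext_of_retract {Y Z : C} (h : Retract Y Z) [Subsingleton (Ext X Z n)] :
    Subsingleton (Ext X Y n) :=
  Function.Injective.subsingleton (f := fun x : Ext X Y n => x.comp (Ext.mk₀ h.i) (add_zero n))
    (Function.LeftInverse.injective (g := fun x => x.comp (Ext.mk₀ h.r) (add_zero n)) fun x => by
      simp)

theorem exists_nontrivial_ext_X₃ {S : ShortComplex C} (hS : S.ShortExact)
    [Nontrivial (Ext X S.X₁ n)]
    (h : ∀ x : Ext X S.X₁ n, x.comp (Ext.mk₀ S.f) (add_zero n) = 0) :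
    ∃ i, i + 1 = n ∧ Nontrivial (Ext X S.X₃ i) := by
  obtain ⟨x, hx⟩ := exists_ne (0 : Ext X S.X₁ n)
  cases n with
  | zero =>
    have := hS.mono_f
    refine absurd (Ext.postcomp_mk₀_injective_of_mono X S.f ?_) hx
    simpa using h x
  | succ i =>
    obtain ⟨y, rfl⟩ := Ext.covariant_sequence_exact₁ X hS x (h x) rfl
    refine ⟨i, rfl, y, 0, ?_⟩
    rintro rfl
    exact hx (Ext.zero_comp ..)

end ExtVanishing

section ExtModule

open Abelian Limits

variable {A : Type u} [CommRing A] {X : ModuleCat.{u} A} {n : ℕ}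

theorem subsingleton_ext_pi {ι : Type} [Finite ι] (Y : ModuleCat.{u} A) [Subsingleton (Ext X Y n)] :
    Subsingleton (Ext X (ModuleCat.of A (ι → Y)) n) := by
  have := Fintype.ofFinite ι
  have : Subsingleton (Ext X (⨁ fun _ : ι => Y) n) :=
    (Ext.addEquivBiproduct X (biproduct.isBilimit fun _ : ι => Y) n).toEquiv.subsingleton
  exact subsingleton_ext_of_retract (Retract.ofIso (ModuleCat.biproductIsoPi fun _ : ι => Y).symm)

theorem smul_ext_eq_zero_of_mem_annihilator {Y : ModuleCat.{u} A} {a : A}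
    (ha : a ∈ Module.annihilator A X) (x : Ext X Y n) : a • x = 0 := by
  have h := Ext.postcomp_smul_id_eq_zero_of_mem_annihilator (M := Y) ha n
  simpa [Ext.mk₀_smul] using congr($h x)

theorem ext_comp_mk₀_eq_zero_of_mem_annihilator_smul {M N : Type u} [AddCommGroup M]
    [Module A M] [AddCommGroup N] [Module A N] {φ : M →ₗ[A] N}
    (hφ : φ ∈ Module.annihilator A X • (⊤ : Submodule A (M →ₗ[A] N)))
    (x : Ext X (ModuleCat.of A M) n) :
    x.comp (Ext.mk₀ (ModuleCat.ofHom φ)) (add_zero n) = 0 := by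
  induction hφ using Submodule.smul_induction_on' with
  | smul a ha ψ _ =>
    change x.comp (Ext.mk₀ (a • ModuleCat.ofHom ψ)) _ = 0
    rw [Ext.mk₀_smul, Ext.comp_smul]
    exact smul_ext_eq_zero_of_mem_annihilator ha _
  | add ψ _ χ _ hψ hχ => rw [ModuleCat.ofHom_add, Ext.mk₀_add, Ext.comp_add, hψ, hχ, add_zero]

end ExtModule

theorem mem_smul_top_of_forall_apply_mem {A : Type*} [CommRing A] {M : Type*} [AddCommGroup M]
    [Module A M] [Module.Free A M] [Module.Finite A M] {κ : Type*} [Finite κ] {I : Ideal A}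
    {φ : M →ₗ[A] (κ → A)} (h : ∀ x k, φ x k ∈ I) :
    φ ∈ I • (⊤ : Submodule A (M →ₗ[A] (κ → A))) := by
  classical
  have := Fintype.ofFinite κ
  let b := Module.Free.chooseBasis A M
  have hφ : φ = ∑ l, ∑ k, φ (b l) k • (LinearMap.single A (fun _ : κ => A) k ∘ₗ b.coord l) := by
    refine b.ext fun l => ?_
    ext k
    simp [LinearMap.sum_apply, Finset.sum_apply, Finsupp.single_apply, Pi.single_apply]
  rw [hφ]
  exact sum_mem fun l _ => sum_mem fun k _ => Submodule.smul_mem_smul (h _ _) trivial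

namespace MinFreeRes

open Abelian

variable {A : Type u} [CommRing A] [IsLocalRing A] {M : Type u} [AddCommGroup M] [Module A M]
  (R : MinFreeRes A M)

theorem apply_mem_maximalIdeal_of_mem_ker_aug {x : Fin (R.b 0) → A} (hx : x ∈ LinearMap.ker R.aug)
    (i : Fin (R.b 0)) : x i ∈ maximalIdeal A := by
  obtain ⟨y, rfl⟩ := (R.exact_zero x).1 hx
  exact R.minimal 0 y i

theorem nonempty_retract_of_b_one_eq_zero (h₀ : R.b 0 ≠ 0) (h₁ : R.b 1 = 0) :
    Nonempty (Retract (ModuleCat.of A A) (ModuleCat.of A M)) := by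
  let i : Fin (R.b 0) := ⟨0, Nat.pos_of_ne_zero h₀⟩
  let r : Retract (ModuleCat.of A A) (ModuleCat.of A (Fin (R.b 0) → A)) :=
    { i := ModuleCat.ofHom (LinearMap.single A (fun _ => A) i)
      r := ModuleCat.ofHom (LinearMap.proj i) }
  exact ⟨r.trans (Retract.ofIso (R.augEquiv h₁).toModuleIso)⟩

/-- Passing from a syzygy to the module lowers the degree of a nonzero `Ext` group by one, because
the inclusion of the syzygy into the free module acts on it as zero: by minimality if the syzygy is
free, and since the degree is `< d` otherwise. -/
theorem exists_nontrivial_ext {X : ModuleCat.{u} A} (hX : maximalIdeal A ≤ Module.annihilator A X)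
    {d : ℕ} (hd : Nontrivial (Ext X (ModuleCat.of A A) d))
    (hlt : ∀ i < d, Subsingleton (Ext X (ModuleCat.of A A) i)) {p : ℕ} (h₀ : R.b p ≠ 0)
    (h₁ : R.b (p + 1) = 0) : ∃ j, j + p = d ∧ Nontrivial (Ext X (ModuleCat.of A M) j) := by
  induction p generalizing M with
  | zero =>
    obtain ⟨r⟩ := R.nonempty_retract_of_b_one_eq_zero h₀ h₁
    refine ⟨d, rfl, not_subsingleton_iff_nontrivial.1 fun _ => ?_⟩
    exact not_subsingleton_iff_nontrivial.2 hd (subsingleton_ext_of_retract r)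
  | succ p ih =>
    obtain ⟨j, rfl, hj⟩ := ih R.tail h₀ h₁
    suffices h : ∀ x : Ext X (ModuleCat.of A (LinearMap.ker R.aug)) j,
        x.comp (Ext.mk₀ (ModuleCat.ofHom (LinearMap.ker R.aug).subtype)) (add_zero j) = 0 by
      obtain ⟨i, rfl, hi⟩ := exists_nontrivial_ext_X₃ R.isSES_aug.shortExact h
      exact ⟨i, by omega, hi⟩
    intro x
    rcases Nat.eq_zero_or_pos p with rfl | hp
    · have := Module.Free.of_equiv (R.tail.augEquiv h₁)
      have := Module.Finite.equiv (R.tail.augEquiv h₁)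
      have haug := mem_smul_top_of_forall_apply_mem (φ := (LinearMap.ker R.aug).subtype)
        fun y => R.apply_mem_maximalIdeal_of_mem_ker_aug y.2
      exact ext_comp_mk₀_eq_zero_of_mem_annihilator_smul (Submodule.smul_mono_left hX haug) x
    · have := hlt j (by omega)
      have := subsingleton_ext_pi (ι := Fin (R.b 0)) (X := X) (n := j) (ModuleCat.of A A)
      exact Subsingleton.elim _ _

end MinFreeRes

section Depth

open Abelian

variable {A : Type u} [CommRing A] [IsLocalRing A] {M : Type u} [AddCommGroup M] [Module A M]

theorem not_extVanish_residueField_iff (i : ℕ) :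
    ¬ extVanish A (ResidueField A) i M ↔
      Nontrivial (Ext (ModuleCat.of A (ResidueField A)) (ModuleCat.of A M) i) := by
  rw [← not_subsingleton_iff_nontrivial, extVanish, extModule, subsingleton_ext_iff_abelianExt]

theorem depth_le_of_nontrivial_ext {i : ℕ}
    (h : Nontrivial (Ext (ModuleCat.of A (ResidueField A)) (ModuleCat.of A M) i)) :
    depth A M ≤ i :=
  sInf_le ⟨i, rfl, (not_extVanish_residueField_iff i).2 h⟩

theorem subsingleton_ext_of_lt_depth {i : ℕ} (h : i < depth A M) :
    Subsingleton (Ext (ModuleCat.of A (ResidueField A)) (ModuleCat.of A M) i) := by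
  contrapose! h
  exact depth_le_of_nontrivial_ext h

theorem nontrivial_ext_of_depth_eq {d : ℕ} (h : depth A M = d) :
    Nontrivial (Ext (ModuleCat.of A (ResidueField A)) (ModuleCat.of A M) d) := by
  have hne : {c : ℕ∞ | ∃ i : ℕ, c = i ∧ ¬ extVanish A (ResidueField A) i M}.Nonempty := by
    by_contra! hempty
    simp [depth, hempty] at h
  obtain ⟨i, hi, hext⟩ := csInf_mem hne
  obtain rfl : d = i := by exact_mod_cast h.symm.trans hi
  exact (not_extVanish_residueField_iff d).1 hext

theorem maximalIdeal_le_annihilator_residueField :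
    maximalIdeal A ≤ Module.annihilator A (ResidueField A) :=
  Ideal.annihilator_quotient.ge

theorem support_residueField :
    Module.support A (ResidueField A) = PrimeSpectrum.zeroLocus (maximalIdeal A) := by
  rw [Module.support_eq_zeroLocus]
  exact congrArg (fun I : Ideal A => PrimeSpectrum.zeroLocus (I : Set A)) Ideal.annihilator_quotient

theorem length_le_ringKrullDim_of_isRegular [IsNoetherianRing A] {rs : List A}
    (h : RingTheory.Sequence.IsRegular A rs) : (rs.length : WithBot ℕ∞) ≤ ringKrullDim A := by
  have : Nontrivial (A ⧸ Ideal.ofList rs) :=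
    Ideal.Quotient.nontrivial_iff.2 (by simpa using h.top_ne_smul.symm)
  rw [← ringKrullDim_add_length_eq_ringKrullDim_of_isRegular rs h]
  exact le_add_of_nonneg_left ringKrullDim_nonneg_of_nontrivial

theorem maximalIdeal_smul_top_lt_top [Module.Finite A M] [Nontrivial M] :
    maximalIdeal A • (⊤ : Submodule A M) < ⊤ :=
  lt_top_iff_ne_top.2
    (Submodule.top_ne_ideal_smul_of_le_jacobson_annihilator (maximalIdeal_le_jacobson _)).symm

theorem exists_isRegular_of_le_depth [IsNoetherianRing A] [Module.Finite A M] [Nontrivial M]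
    {m : ℕ} (hm : m ≤ depth A M) :
    ∃ rs : List A, rs.length = m ∧ RingTheory.Sequence.IsRegular M rs := by
  obtain ⟨rs, hlen, -, hrs⟩ := ModuleCat.exists_isRegular_of_exists_subsingleton_ext
    (maximalIdeal A) m (ModuleCat.of A M) maximalIdeal_smul_top_lt_top
    (ModuleCat.of A (ResidueField A)) support_residueField fun i hi =>
      subsingleton_ext_of_lt_depth (lt_of_lt_of_le (by exact_mod_cast hi) hm)
  exact ⟨rs, hlen, hrs⟩

theorem depth_self_le_ringKrullDim [IsNoetherianRing A] : depth A A ≤ ringKrullDim A := by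
  obtain ⟨D, hD⟩ := WithBot.ne_bot_iff_exists.1 (ringKrullDim_ne_bot (R := A))
  rw [← hD, WithBot.coe_le_coe]
  refine ENat.forall_natCast_le_iff_le.1 fun m hm => ?_
  obtain ⟨rs, rfl, hrs⟩ := exists_isRegular_of_le_depth hm
  rw [← WithBot.coe_le_coe, hD]
  exact length_le_ringKrullDim_of_isRegular hrs

theorem depth_self_ne_top [IsNoetherianRing A] : depth A A ≠ ⊤ := by
  intro htop
  have h := depth_self_le_ringKrullDim (A := A)
  rw [htop] at h
  exact ringKrullDim_ne_top (top_le_iff.1 h)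

end Depth

section FiniteProjDim

variable {A : Type u} [CommRing A] [IsLocalRing A] {M : Type u} [AddCommGroup M] [Module A M]

theorem MinFreeRes.depth_add_le_depth_self [IsNoetherianRing A] (R : MinFreeRes A M) {p : ℕ}
    (h₀ : R.b p ≠ 0) (h₁ : R.b (p + 1) = 0) : depth A M + p ≤ depth A A := by
  obtain ⟨d, hd⟩ := ENat.ne_top_iff_exists.1 (depth_self_ne_top (A := A))
  obtain ⟨j, rfl, hj⟩ := R.exists_nontrivial_ext maximalIdeal_le_annihilator_residueField
    (nontrivial_ext_of_depth_eq hd.symm)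
    (fun i hi => subsingleton_ext_of_lt_depth (by rw [← hd]; exact_mod_cast hi)) h₀ h₁
  rw [← hd, Nat.cast_add]
  exact add_le_add_left (depth_le_of_nontrivial_ext hj) _

theorem hasFiniteProjDim_of_complexity_eq_zero (h : complexity A M = 0) :
    HasFiniteProjDim A M := by
  have hne : {c : ℕ∞ | ∃ t : ℕ, c = t ∧ HasComplexityLE A M t}.Nonempty := by
    by_contra! hempty
    simp [complexity, hempty] at h
  obtain ⟨t, ht, R, a, hR⟩ := csInf_mem hne
  obtain rfl : t = 0 := by exact_mod_cast ht.symm.trans h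
  have hsmall : ∀ᶠ i : ℕ in atTop, a * (i : ℝ) ^ ((0 : ℤ) - 1) < 1 := by
    have := tendsto_const_div_atTop_nhds_zero_nat a
    simpa [div_eq_mul_inv] using this.eventually_lt_const one_pos
  obtain ⟨p, hp⟩ := eventually_atTop.1 (hR.and hsmall)
  refine ⟨p, R, fun i hi => ?_⟩
  exact Nat.lt_one_iff.1 (by exact_mod_cast (hp i hi.le).1.trans_lt (hp i hi.le).2)

theorem torVanish_of_depth_sub_depth_lt [IsNoetherianRing A] (hM : HasFiniteProjDim A M)
    {N : Type u} [AddCommGroup N] [Module A N] {i : ℕ} (hi : depth A A - depth A M < i) :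
    torVanish A M i N := by
  classical
  obtain ⟨t, R, hR⟩ := hM
  have hex : ∃ q, R.b q = 0 := ⟨t + 1, hR _ t.lt_succ_self⟩
  obtain ⟨q, hq, hmin⟩ : ∃ q, R.b q = 0 ∧ ∀ p < q, R.b p ≠ 0 :=
    ⟨Nat.find hex, Nat.find_spec hex, fun _ => Nat.find_min hex⟩
  suffices q ≤ i by
    rw [← Nat.sub_add_cancel this]
    exact R.torVanish_add_of_b_eq_zero hq _
  cases q with
  | zero => exact i.zero_le
  | succ p =>
    have hp : (p : ℕ∞) ≤ depth A A - depth A M := by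
      have h := R.depth_add_le_depth_self (hmin p p.lt_succ_self) hq
      exact ENat.le_sub_of_add_le_left
        (ne_top_of_le_ne_top depth_self_ne_top (le_self_add.trans h)) h
    exact Nat.succ_le_of_lt (by exact_mod_cast hp.trans_lt hi)

end FiniteProjDim

section Periodic

variable {P : ℕ → Prop} {B : ℕ}

theorem forall_gt_of_periodic_of_window {m t : ℕ} (hm : 0 < m)
    (hper : ∀ i, B < i → (P (i + m) ↔ P i)) (ht : B < t) (hwindow : ∀ j < m, P (t + j)) :
    ∀ i, B < i → P i := by
  have hiter : ∀ k i, B < i → (P (i + k * m) ↔ P i) := by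
    intro k i hi
    induction k with
    | zero => simp
    | succ k ih => rw [Nat.succ_mul, ← add_assoc, hper _ (by omega), ih]
  have hup : ∀ j, P (t + j) := fun j => by
    rw [← Nat.mod_add_div' j m, ← add_assoc]
    exact (hiter _ _ (by omega)).2 (hwindow _ (Nat.mod_lt j hm))
  intro i hi
  rw [← hiter t i hi]
  have : t ≤ i + t * m := (Nat.le_mul_of_pos_right t hm).trans (Nat.le_add_left _ _)
  simpa [Nat.add_sub_cancel' this] using hup (i + t * m - t)

end Periodic

section Reduction

variable {A : Type u} [CommRing A] [IsLocalRing A] {N : Type u} [AddCommGroup N] [Module A N]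

section Step

variable {M K S : Type u} [AddCommGroup M] [Module A M] [AddCommGroup K] [Module A K]
  [AddCommGroup S] [Module A S] {f : M →ₗ[A] K} {g : K →ₗ[A] S} {n : ℕ}

theorem IsSES.torVanish_middle_of_isSyzygyOf (h : IsSES f g) (hS : IsSyzygyOf A M S n) {i : ℕ}
    (hi : 0 < i) (h₀ : torVanish A M i N) (hn : torVanish A M (i + n) N) : torVanish A K i N := by
  obtain ⟨i, rfl⟩ := Nat.exists_eq_succ_of_ne_zero hi.ne'
  exact h.torVanish_middle h₀ ((hS.torVanish_succ_iff i).2 hn)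

theorem IsSES.torVanish_add_iff_of_isSyzygyOf (h : IsSES f g) (hS : IsSyzygyOf A M S n) {i : ℕ}
    (hK : torVanish A K i N) (hK' : torVanish A K (i + 1) N) :
    torVanish A M (i + (n + 1)) N ↔ torVanish A M i N := by
  rw [← add_assoc, add_right_comm, ← hS.torVanish_succ_iff]
  exact ⟨fun hSi => h.torVanish_left hSi hK, h.torVanish_right hK'⟩

end Step

theorem torVanish_of_window_of_chain {c : ℕ} (K : Fin (c + 1) → Type u)
    [∀ i, AddCommGroup (K i)] [∀ i, Module A (K i)]
    (S : Fin c → Type u) [∀ i, AddCommGroup (S i)] [∀ i, Module A (S i)] (n : Fin c → ℕ)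
    (hsyz : ∀ i, IsSyzygyOf A (K i.castSucc) (S i) (n i))
    (f : ∀ i : Fin c, K i.castSucc →ₗ[A] K i.succ) (g : ∀ i : Fin c, K i.succ →ₗ[A] S i)
    (hses : ∀ i, IsSES (f i) (g i)) {B : ℕ}
    (hlast : ∀ i, B < i → torVanish A (K (Fin.last c)) i N) {t : ℕ} (ht : B < t)
    (hwindow : ∀ j ≤ ∑ i, n i, torVanish A (K 0) (t + j) N) :
    ∀ i, B < i → torVanish A (K 0) i N := by
  induction c with
  | zero => exact hlast
  | succ c ih =>
    rw [Fin.sum_univ_succ] at hwindow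
    have hK₁ : ∀ i, B < i → torVanish A (K (Fin.succ 0)) i N := by
      refine ih (fun i => K i.succ) (fun i => S i.succ) (fun i => n i.succ) (fun i => hsyz i.succ)
        (fun i => f i.succ) (fun i => g i.succ) (fun i => hses i.succ) hlast fun j hj => ?_
      refine (hses 0).torVanish_middle_of_isSyzygyOf (hsyz 0) (by omega) (hwindow j (by omega)) ?_
      rw [add_assoc]
      exact hwindow _ (by omega)
    have hper : ∀ i, B < i → (torVanish A (K 0) (i + (n 0 + 1)) N ↔ torVanish A (K 0) i N) :=
      fun i hi => (hses 0).torVanish_add_iff_of_isSyzygyOf (hsyz 0) (hK₁ i hi)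
        (hK₁ (i + 1) (by omega))
    exact forall_gt_of_periodic_of_window (n 0).succ_pos hper ht fun j hj => hwindow j (by omega)

end Reduction

theorem window_iff_eventually_iff_forall_gt {P : ℕ → Prop} {b s : ℕ}
    (all_of_window : ∀ t, b < t → (∀ j ≤ s, P (t + j)) → ∀ i, b < i → P i) :
    ((∃ t, b < t ∧ ∀ j ≤ s, P (t + j)) ↔ ∀ᶠ i in atTop, P i) ∧
      ((∀ᶠ i in atTop, P i) ↔ ∀ i, b < i → P i) := by
  have eventually_of_all (h : ∀ i, b < i → P i) : ∀ᶠ i in atTop, P i :=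
    (eventually_gt_atTop b).mono h
  have window_of_eventually (h : ∀ᶠ i in atTop, P i) : ∃ t, b < t ∧ ∀ j ≤ s, P (t + j) := by
    obtain ⟨q, hq⟩ := eventually_atTop.1 h
    exact ⟨max q (b + 1), by omega, fun j _ => hq _ (by omega)⟩
  have all_of_exists_window : (∃ t, b < t ∧ ∀ j ≤ s, P (t + j)) → ∀ i, b < i → P i :=
    fun ⟨t, ht, h⟩ => all_of_window t ht h
  exact ⟨⟨eventually_of_all ∘ all_of_exists_window, window_of_eventually⟩,
    all_of_exists_window ∘ window_of_eventually, eventually_of_all⟩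

end ComplexityTest

theorem torVanishing_of_hasFreeRedCx_general
    {A : Type u} [CommRing A] [IsLocalRing A] [IsNoetherianRing A] {c : ℕ}
    (K : Fin (c + 1) → Type u) [∀ i, AddCommGroup (K i)] [∀ i, Module A (K i)]
    (S : Fin c → Type u) [∀ i, AddCommGroup (S i)] [∀ i, Module A (S i)] (n : Fin c → ℕ)
    (hsyz : ∀ i, IsSyzygyOf A (K i.castSucc) (S i) (n i))
    (f : ∀ i : Fin c, K i.castSucc →ₗ[A] K i.succ) (g : ∀ i : Fin c, K i.succ →ₗ[A] S i)
    (hses : ∀ i, IsSES (f i) (g i)) (hlast : HasFiniteProjDim A (K (Fin.last c)))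
    (N : Type u) [AddCommGroup N] [Module A N] :
    ((∃ t : ℕ, (⨆ i, (depth A A - depth A (K i))) < (t : ℕ∞) ∧
        ∀ j ≤ ∑ i, n i, torVanish A (K 0) (t + j) N) ↔
      ∀ᶠ i in atTop, torVanish A (K 0) i N) ∧
    ((∀ᶠ i in atTop, torVanish A (K 0) i N) ↔
      ∀ i : ℕ, (⨆ i, (depth A A - depth A (K i))) < (i : ℕ∞) → torVanish A (K 0) i N) := by
  have hb : ⨆ i, (depth A A - depth A (K i)) ≠ ⊤ :=
    ne_top_of_le_ne_top depth_self_ne_top (iSup_le fun _ => tsub_le_self)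
  obtain ⟨b, hb⟩ := ENat.ne_top_iff_exists.1 hb
  have hle : depth A A - depth A (K (Fin.last c)) ≤ b :=
    hb ▸ le_iSup (fun i => depth A A - depth A (K i)) _
  have hKlast : ∀ i, b < i → torVanish A (K (Fin.last c)) i N := fun i hi =>
    torVanish_of_depth_sub_depth_lt hlast (hle.trans_lt (Nat.cast_lt.2 hi))
  simp only [← hb, Nat.cast_lt]
  exact window_iff_eventually_iff_forall_gt fun t ht hwindow =>
    torVanish_of_window_of_chain K S n hsyz f g hses hKlast ht hwindow

/-- **Proposition 2.3 (homology vanishing)**: let `M` be a module of free reducible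
complexity `c > 0`, with reduction data `M = K 0, K 1, …, K c`, integers `n 1, …, n c`
and short exact sequences `0 → K (i-1) → K i → Ω^{n i}(K (i-1)) → 0` with
`cx (K i) = c - i`, and let `b = max_i (depth A - depth (K i))`. Then for any module
`N` the following are equivalent: (i) there is a `t > b` with `Tor_{t+j}(M,N) = 0` for
`0 ≤ j ≤ n 1 + ⋯ + n c`; (ii) `Tor_i(M,N) = 0` for `i ≫ 0`; (iii) `Tor_i(M,N) = 0`
for all `i > b`. -/
theorem torVanishing_of_hasFreeRedCx
    (A : Type u) [CommRing A] [IsLocalRing A] [IsNoetherianRing A]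
    (M : Type u) [AddCommGroup M] [Module A M] [Module.Finite A M]
    (hM : HasFreeRedCx A M)
    (c : ℕ) (hcpos : 0 < c) (hcx : complexity A M = c)
    (K : Fin (c + 1) → Type u) [∀ i, AddCommGroup (K i)] [∀ i, Module A (K i)]
    [∀ i, Module.Finite A (K i)]
    (e : K 0 ≃ₗ[A] M)
    (S : Fin c → Type u) [∀ i, AddCommGroup (S i)] [∀ i, Module A (S i)]
    (n : Fin c → ℕ)
    (hsyz : ∀ i : Fin c, IsSyzygyOf A (K i.castSucc) (S i) (n i))
    (f : ∀ i : Fin c, K i.castSucc →ₗ[A] K i.succ)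
    (g : ∀ i : Fin c, K i.succ →ₗ[A] S i)
    (hses : ∀ i : Fin c, IsSES (f i) (g i))
    (hcxK : ∀ i : Fin c, complexity A (K i.succ) = (c : ℕ∞) - ((i : ℕ) + 1))
    (N : Type u) [AddCommGroup N] [Module A N] [Module.Finite A N] :
    ((∃ t : ℕ, (⨆ i, (depth A A - depth A (K i))) < (t : ℕ∞) ∧
        ∀ j : ℕ, j ≤ ∑ i, n i → torVanish A M (t + j) N) ↔
      (∀ᶠ i in Filter.atTop, torVanish A M i N)) ∧
    ((∀ᶠ i in Filter.atTop, torVanish A M i N) ↔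
      (∀ i : ℕ, (⨆ i, (depth A A - depth A (K i))) < (i : ℕ∞) → torVanish A M i N)) := by
  obtain ⟨c, rfl⟩ := Nat.exists_eq_succ_of_ne_zero hcpos.ne'
  have hcxlast : complexity A (K (Fin.last (c + 1))) = 0 := by simpa using hcxK (Fin.last c)
  simp only [← torVanish_congr e]
  exact torVanishing_of_hasFreeRedCx_general K S n hsyz f g hses
    (hasFiniteProjDim_of_complexity_eq_zero hcxlast) N
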